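/- arXiv:2012.10424 — 4 statements merged into one kernel-verified Lean document; each statement's English description precedes it below -/
import Mathlib

section
/- Let d, p, C be positive integers with p ≤ d, let Σ_W ∈ ℝ^{d×d} be symmetric positive definite, let μ_1, …, μ_C ∈ ℝ^d, and let A ∈ ℝ^{p×d} be a surjective matrix (rank p). Then equality (1/C) ∑_{c=1}^C (A μ_c)ᵀ (A Σ_W Aᵀ)⁻¹ (A μ_c) = (1/C) ∑_{c=1}^C μ_cᵀ Σ_W⁻¹ μ_c holds if and only if for every c ∈ {1, …, C}, the vector Σ_W⁻¹ μ_c is orthogonal to the kernel of A. -/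
open Matrix

/-!
Let `L = Σ⁻¹ - Aᴴ (A Σ Aᴴ)⁻¹ A`, so that `xᴴ L x` is the amount by which `A` decreases the
discriminant `xᴴ Σ⁻¹ x`. Since `A Σ L = 0`, we get `L Σ L = L`, hence
`xᴴ L x = (L x)ᴴ Σ (L x)` is nonnegative and vanishes exactly when `L x = 0`. Moreover
`Σ L` is a projection onto the kernel of `A`, and `(Σ⁻¹ x)ᴴ (Σ L u) = (L x)ᴴ u`, so `L x = 0`
means that `Σ⁻¹ x` is orthogonal to this kernel.
-/

section CommRing

variable {R m n : Type*} [CommRing R] [StarRing R] [Fintype m] [DecidableEq m]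
  [Fintype n] [DecidableEq n]

/-- The matrix of the Hermitian form measuring the loss in the discriminant `xᴴ S⁻¹ x` when the
data are transformed by `A`; see `star_dotProduct_fisherLoss_mulVec`. It is meaningful only if
`S` and `A * S * Aᴴ` are invertible, because `⁻¹` is zero on singular matrices. -/
noncomputable def fisherLoss (S : Matrix n n R) (A : Matrix m n R) : Matrix n n R :=
  S⁻¹ - Aᴴ * (A * S * Aᴴ)⁻¹ * A

variable {S : Matrix n n R} {A : Matrix m n R}

lemma star_dotProduct_fisherLoss_mulVec (S : Matrix n n R) (A : Matrix m n R) (x : n → R) :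
    star x ⬝ᵥ fisherLoss S A *ᵥ x =
      star x ⬝ᵥ S⁻¹ *ᵥ x - star (A *ᵥ x) ⬝ᵥ (A * S * Aᴴ)⁻¹ *ᵥ (A *ᵥ x) := by
  simp only [fisherLoss, sub_mulVec, dotProduct_sub, star_mulVec, ← mulVec_mulVec,
    dotProduct_mulVec]

lemma isHermitian_fisherLoss (hS : S.IsHermitian) (A : Matrix m n R) :
    (fisherLoss S A).IsHermitian :=
  hS.inv.sub (isHermitian_conjTranspose_mul_mul A (isHermitian_mul_mul_conjTranspose A hS).inv)

lemma mul_mul_fisherLoss (hS : IsUnit S) (hASA : IsUnit (A * S * Aᴴ)) :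
    A * S * fisherLoss S A = 0 := by
  rw [isUnit_iff_isUnit_det] at hS hASA
  calc A * S * fisherLoss S A
      = A * (S * S⁻¹) - A * S * Aᴴ * (A * S * Aᴴ)⁻¹ * A := by
        simp only [fisherLoss, Matrix.mul_sub, Matrix.mul_assoc]
    _ = 0 := by
        rw [mul_nonsing_inv _ hS, mul_nonsing_inv _ hASA, Matrix.mul_one, Matrix.one_mul, sub_self]

lemma fisherLoss_mul_mul_self (hS : IsUnit S) (hASA : IsUnit (A * S * Aᴴ)) :
    fisherLoss S A * S * fisherLoss S A = fisherLoss S A := by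
  calc fisherLoss S A * S * fisherLoss S A
      = S⁻¹ * S * fisherLoss S A - Aᴴ * (A * S * Aᴴ)⁻¹ * (A * S * fisherLoss S A) := by
        nth_rw 1 [fisherLoss]
        simp only [Matrix.sub_mul, Matrix.mul_assoc]
    _ = fisherLoss S A := by
        rw [mul_mul_fisherLoss hS hASA, nonsing_inv_mul _ ((isUnit_iff_isUnit_det S).mp hS),
          Matrix.one_mul, Matrix.mul_zero, sub_zero]

lemma fisherLoss_mulVec_eq_zero_iff (hS : S.IsHermitian) (hSu : IsUnit S)
    (hASA : IsUnit (A * S * Aᴴ)) (x : n → R) :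
    fisherLoss S A *ᵥ x = 0 ↔ ∀ v, A *ᵥ v = 0 → star (S⁻¹ *ᵥ x) ⬝ᵥ v = 0 := by
  constructor
  · intro hx v hv
    have hSx : S⁻¹ *ᵥ x = Aᴴ *ᵥ ((A * S * Aᴴ)⁻¹ *ᵥ (A *ᵥ x)) := by
      simpa only [fisherLoss, sub_mulVec, sub_eq_zero, ← mulVec_mulVec] using hx
    rw [hSx, star_mulVec, conjTranspose_conjTranspose, ← dotProduct_mulVec, hv, dotProduct_zero]
  · intro hx
    have hker (u : n → R) : A *ᵥ (S *ᵥ (fisherLoss S A *ᵥ u)) = 0 := by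
      rw [mulVec_mulVec, mulVec_mulVec, mul_mul_fisherLoss hSu hASA, zero_mulVec]
    rw [← star_eq_zero]
    refine dotProduct_eq_zero _ fun u ↦ ?_
    calc star (fisherLoss S A *ᵥ x) ⬝ᵥ u
        = star x ⬝ᵥ fisherLoss S A *ᵥ u := by
          rw [star_mulVec, (isHermitian_fisherLoss hS A).eq, dotProduct_mulVec]
      _ = star (S⁻¹ *ᵥ x) ⬝ᵥ S *ᵥ (fisherLoss S A *ᵥ u) := by
          rw [star_mulVec, hS.inv.eq, ← dotProduct_mulVec, mulVec_mulVec,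
            nonsing_inv_mul _ ((isUnit_iff_isUnit_det S).mp hSu), one_mulVec]
      _ = 0 := hx _ (hker u)

lemma posSemidef_fisherLoss [PartialOrder R] (hS : S.PosSemidef) (hSu : IsUnit S)
    (hASA : IsUnit (A * S * Aᴴ)) : (fisherLoss S A).PosSemidef := by
  have h := hS.conjTranspose_mul_mul_same (fisherLoss S A)
  rwa [(isHermitian_fisherLoss hS.isHermitian A).eq, fisherLoss_mul_mul_self hSu hASA] at h

lemma star_dotProduct_fisherLoss_mulVec_eq_zero_iff [PartialOrder R] (hS : S.PosDef)
    (hSu : IsUnit S) (hASA : IsUnit (A * S * Aᴴ)) (x : n → R) :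
    star x ⬝ᵥ fisherLoss S A *ᵥ x = 0 ↔ fisherLoss S A *ᵥ x = 0 := by
  have hform : star x ⬝ᵥ fisherLoss S A *ᵥ x =
      star (fisherLoss S A *ᵥ x) ⬝ᵥ S *ᵥ (fisherLoss S A *ᵥ x) := by
    rw [star_mulVec, (isHermitian_fisherLoss hS.isHermitian A).eq, ← dotProduct_mulVec,
      mulVec_mulVec, mulVec_mulVec, fisherLoss_mul_mul_self hSu hASA]
  refine ⟨fun hx ↦ ?_, fun hx ↦ by rw [hx, dotProduct_zero]⟩
  by_contra hne
  exact (hS.dotProduct_mulVec_pos hne).ne' (hform ▸ hx)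

end CommRing

lemma vecMul_injective_of_mulVec_surjective {R m n : Type*} [Semiring R] [Fintype m] [Fintype n]
    {A : Matrix m n R} (hA : Function.Surjective A.mulVec) : Function.Injective A.vecMul := by
  classical
  obtain ⟨B, hAB⟩ := mulVec_surjective_iff_exists_right_inverse.mp hA
  have hleft : Function.LeftInverse B.vecMul A.vecMul := fun x ↦ by
    change x ᵥ* A ᵥ* B = x
    rw [vecMul_vecMul, hAB, vecMul_one]
  exact hleft.injective

theorem fisher_ratio_equality_iff_orthogonal_kernel_general {K m n ι : Type*}
    [Field K] [PartialOrder K] [IsStrictOrderedRing K] [StarRing K]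
    [Fintype m] [DecidableEq m] [Fintype n] [DecidableEq n] [Fintype ι] [Nonempty ι]
    {S : Matrix n n K} (hS : S.PosDef) (μ : ι → n → K)
    {A : Matrix m n K} (hA : Function.Surjective A.mulVec) :
    (1 / Fintype.card ι : K) * ∑ c, star (A *ᵥ μ c) ⬝ᵥ (A * S * Aᴴ)⁻¹ *ᵥ (A *ᵥ μ c) =
        (1 / Fintype.card ι : K) * ∑ c, star (μ c) ⬝ᵥ S⁻¹ *ᵥ μ c ↔
      ∀ c v, A *ᵥ v = 0 → star (S⁻¹ *ᵥ μ c) ⬝ᵥ v = 0 := by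
  have hASA : IsUnit (A * S * Aᴴ) :=
    (hS.mul_mul_conjTranspose_same (vecMul_injective_of_mulVec_surjective hA)).isUnit
  have hcard : (1 / Fintype.card ι : K) ≠ 0 :=
    one_div_ne_zero (Nat.cast_ne_zero.mpr Fintype.card_ne_zero)
  have hnonneg (c : ι) : 0 ≤ star (μ c) ⬝ᵥ fisherLoss S A *ᵥ μ c :=
    (posSemidef_fisherLoss hS.posSemidef hS.isUnit hASA).dotProduct_mulVec_nonneg (μ c)
  rw [mul_right_inj' hcard, eq_comm, ← sub_eq_zero, ← Finset.sum_sub_distrib]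
  simp only [← star_dotProduct_fisherLoss_mulVec]
  rw [Finset.sum_eq_zero_iff_of_nonneg fun c _ ↦ hnonneg c]
  simp only [Finset.mem_univ, true_imp_iff, fisherLoss_mulVec_eq_zero_iff hS.isHermitian hS.isUnit
    hASA, star_dotProduct_fisherLoss_mulVec_eq_zero_iff hS hS.isUnit hASA]

/-- For a positive definite within-class covariance `Sw`, class means `μ c`,
and a surjective matrix `A : ℝ^{p×d}` (rank `p`), the Fisher discriminant ratio is preserved
under `A` if and only if for every class `c`, the vector `Sw⁻¹ μ_c` is orthogonal to the
kernel of `A`. -/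
theorem fisher_ratio_equality_iff_orthogonal_kernel
    (d p C : ℕ) (hd : 0 < d) (hp : 0 < p) (hC : 0 < C) (hpd : p ≤ d)
    (Sw : Matrix (Fin d) (Fin d) ℝ) (hSw : Sw.PosDef)
    (μ : Fin C → Fin d → ℝ)
    (A : Matrix (Fin p) (Fin d) ℝ) (hA : Function.Surjective A.mulVec) :
    ((1 / C : ℝ) * ∑ c, A.mulVec (μ c) ⬝ᵥ ((A * Sw * Aᵀ)⁻¹).mulVec (A.mulVec (μ c)) =
        (1 / C : ℝ) * ∑ c, μ c ⬝ᵥ (Sw⁻¹).mulVec (μ c)) ↔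
      ∀ c : Fin C, ∀ v : Fin d → ℝ, A.mulVec v = 0 → (Sw⁻¹).mulVec (μ c) ⬝ᵥ v = 0 := by
  have : Nonempty (Fin C) := Fin.pos_iff_nonempty.mp hC
  simpa only [star_trivial, conjTranspose_eq_transpose_of_trivial, Fintype.card_fin] using
    fisher_ratio_equality_iff_orthogonal_kernel_general hSw μ hA
end

section
/- Let s > 1/2 and C₁, C₂ > 0. There exists a constant K > 0, depending only on s, C₁ and C₂, such that for every integer d ≥ 1, every σ with 0 < σ ≤ C₁, and every μ ∈ ℝ^d whose sorted coefficients satisfy C₁ r^{−s} ≤ |μ^{(r)}| ≤ C₂ r^{−s} for all 1 ≤ r ≤ d, one has ∑_{m=1}^d min(μ[m]², σ²) ≤ K σ^{2 − 1/s}. -/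
/-- `z` has sorted coefficients (by decreasing absolute value) satisfying
`c₁ r^{−s} ≤ |z^{(r)}| ≤ c₂ r^{−s}` for all `1 ≤ r ≤ d` (here ranks are `0`-indexed,
so rank `r : Fin d` corresponds to `r + 1`). -/
def sortedDecay (s c₁ c₂ : ℝ) {d : ℕ} (z : Fin d → ℝ) : Prop :=
  ∃ e : Equiv.Perm (Fin d),
    (∀ r r' : Fin d, r ≤ r' → |z (e r')| ≤ |z (e r)|) ∧
    ∀ r : Fin d, c₁ * ((r : ℝ) + 1) ^ (-s) ≤ |z (e r)| ∧ |z (e r)| ≤ c₂ * ((r : ℝ) + 1) ^ (-s)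

/-!
If `a` is dominated by `C r ^ (-p)` along distinct ranks `r = 1, 2, …` and is capped at `τ`, then
with `b = (C / τ) ^ (1 / p)`, the point where `C x ^ (-p)` crosses `τ`, the capped majorant is
`C (max x b) ^ (-p)`. The integral test bounds its sum by
`C ∫₀^∞ (max x b) ^ (-p) dx = p / (p - 1) * C * b ^ (1 - p)`, and `C * b ^ (1 - p)` is
`C ^ (1 / p) * τ ^ (1 - 1 / p)`. The theorem is the case `p = 2 s`, `C = c₂ ^ 2`, `τ = σ ^ 2`.
-/

open MeasureTheory Set

section TruncatedPower

variable {p b : ℝ}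

lemma max_rpow_neg_eq_min {x : ℝ} (hp : 0 ≤ p) (hx : 0 < x) (hb : 0 < b) :
    max x b ^ (-p) = min (x ^ (-p)) (b ^ (-p)) :=
  (Real.antitoneOn_rpow_Ioi_of_exponent_nonpos (neg_nonpos.mpr hp)).map_max hx hb

/- Truncating the variable, not the value, keeps monotonicity at the origin, where Mathlib's
convention `0 ^ (-p) = 0` would break it. -/
lemma antitone_max_rpow_neg (hp : 0 ≤ p) (hb : 0 < b) :
    Antitone fun x : ℝ ↦ max x b ^ (-p) := fun _ _ hxy ↦
  Real.rpow_le_rpow_of_nonpos (lt_max_of_lt_right hb) (max_le_max_right b hxy)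
    (neg_nonpos.mpr hp)

lemma eqOn_max_rpow_neg_Ioc : EqOn (fun x : ℝ ↦ max x b ^ (-p)) (fun _ ↦ b ^ (-p)) (Ioc 0 b) :=
  fun x hx ↦ by simp only [max_eq_right hx.2]

lemma eqOn_max_rpow_neg_Ioi : EqOn (fun x : ℝ ↦ max x b ^ (-p)) (fun x ↦ x ^ (-p)) (Ioi b) :=
  fun x hx ↦ by simp only [max_eq_left (mem_Ioi.mp hx).le]

lemma integrableOn_Ioc_max_rpow_neg :
    IntegrableOn (fun x : ℝ ↦ max x b ^ (-p)) (Ioc 0 b) :=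
  (integrableOn_congr_fun eqOn_max_rpow_neg_Ioc measurableSet_Ioc).mpr
    (integrableOn_const measure_Ioc_lt_top.ne)

lemma integrableOn_Ioi_max_rpow_neg (hp : 1 < p) (hb : 0 < b) :
    IntegrableOn (fun x : ℝ ↦ max x b ^ (-p)) (Ioi b) :=
  (integrableOn_congr_fun eqOn_max_rpow_neg_Ioi measurableSet_Ioi).mpr
    (integrableOn_Ioi_rpow_of_lt (neg_lt_neg hp) hb)

lemma integrableOn_Ioi_zero_max_rpow_neg (hp : 1 < p) (hb : 0 < b) :
    IntegrableOn (fun x : ℝ ↦ max x b ^ (-p)) (Ioi 0) := by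
  rw [← Ioc_union_Ioi_eq_Ioi hb.le]
  exact integrableOn_Ioc_max_rpow_neg.union (integrableOn_Ioi_max_rpow_neg hp hb)

lemma integral_Ioi_zero_max_rpow_neg (hp : 1 < p) (hb : 0 < b) :
    ∫ x in Ioi (0 : ℝ), max x b ^ (-p) = p / (p - 1) * b ^ (1 - p) := by
  have hplateau : ∫ x in Ioc 0 b, max x b ^ (-p) = b ^ (1 - p) := by
    rw [setIntegral_congr_fun measurableSet_Ioc eqOn_max_rpow_neg_Ioc, setIntegral_const,
      Real.volume_real_Ioc_of_le hb.le, sub_zero, smul_eq_mul, sub_eq_add_neg,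
      Real.rpow_one_add' hb.le (by linarith)]
  have htail : ∫ x in Ioi b, max x b ^ (-p) = b ^ (1 - p) / (p - 1) := by
    rw [setIntegral_congr_fun measurableSet_Ioi eqOn_max_rpow_neg_Ioi,
      integral_Ioi_rpow_of_lt (neg_lt_neg hp) hb, neg_add_eq_sub, ← neg_sub p 1, neg_div_neg_eq]
  have hp₁ : p - 1 ≠ 0 := (sub_pos.mpr hp).ne'
  rw [← Ioc_union_Ioi_eq_Ioi hb.le, setIntegral_union (Ioc_disjoint_Ioi le_rfl) measurableSet_Ioi
    integrableOn_Ioc_max_rpow_neg (integrableOn_Ioi_max_rpow_neg hp hb), hplateau, htail]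
  field_simp
  ring

lemma summable_max_rpow_neg (hp : 1 < p) (hb : 0 < b) :
    Summable fun n : ℕ ↦ max ((n : ℝ) + 1) b ^ (-p) := by
  have hsum := ((antitone_max_rpow_neg (by linarith) hb).antitoneOn _)
    |>.summable_of_integrableOn_Ioi_zero (integrableOn_Ioi_zero_max_rpow_neg hp hb)
      fun x _ ↦ by positivity
  exact_mod_cast (summable_nat_add_iff 1).mpr hsum

lemma tsum_max_rpow_neg_le (hp : 1 < p) (hb : 0 < b) :
    ∑' n : ℕ, max ((n : ℝ) + 1) b ^ (-p) ≤ p / (p - 1) * b ^ (1 - p) := by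
  rw [← integral_Ioi_zero_max_rpow_neg hp hb]
  exact_mod_cast ((antitone_max_rpow_neg (by linarith) hb).antitoneOn _).tsum_add_one_le_integral
    (integrableOn_Ioi_zero_max_rpow_neg hp hb) fun x _ ↦ by positivity

end TruncatedPower

section CappedSum

variable {p C τ : ℝ}

lemma min_mul_rpow_neg_eq_mul_max_rpow_neg {x : ℝ} (hp : 0 < p) (hC : 0 < C) (hτ : 0 < τ)
    (hx : 0 < x) : min (C * x ^ (-p)) τ = C * max x ((C / τ) ^ (1 / p)) ^ (-p) := by
  have hcross : C * ((C / τ) ^ (1 / p)) ^ (-p) = τ := by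
    rw [← Real.rpow_mul (by positivity), mul_neg, one_div_mul_cancel hp.ne', Real.rpow_neg_one,
      inv_div, mul_div_cancel₀ _ hC.ne']
  rw [max_rpow_neg_eq_min hp.le hx (by positivity), mul_min_of_nonneg _ _ hC.le, hcross]

lemma mul_div_rpow_one_div_rpow_one_sub (hp : p ≠ 0) (hC : 0 < C) (hτ : 0 < τ) :
    C * ((C / τ) ^ (1 / p)) ^ (1 - p) = C ^ (1 / p) * τ ^ (1 - 1 / p) := by
  have hexp : 1 / p * (1 - p) = 1 / p - 1 := by field_simp
  rw [← Real.rpow_mul (by positivity), hexp, Real.div_rpow hC.le hτ.le, ← neg_sub 1 (1 / p),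
    Real.rpow_neg hτ.le, div_inv_eq_mul, neg_sub, Real.rpow_sub_one hC.ne', ← mul_assoc,
    mul_div_cancel₀ _ hC.ne']

theorem summable_min_and_tsum_min_le_of_le_rpow_neg {ι : Type*} (hp : 1 < p) (hC : 0 < C)
    (hτ : 0 < τ) {a : ι → ℝ} (ha : ∀ i, 0 ≤ a i) {rank : ι → ℕ} (hrank : rank.Injective)
    (hdecay : ∀ i, a i ≤ C * ((rank i : ℝ) + 1) ^ (-p)) :
    Summable (fun i ↦ min (a i) τ) ∧
      ∑' i, min (a i) τ ≤ p / (p - 1) * C ^ (1 / p) * τ ^ (1 - 1 / p) := by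
  have hp₀ : 0 < p := by linarith
  set b := (C / τ) ^ (1 / p) with hb_def
  have hb : 0 < b := by positivity
  have hmajorant (i : ι) : min (a i) τ ≤ C * max ((rank i : ℝ) + 1) b ^ (-p) := by
    rw [hb_def, ← min_mul_rpow_neg_eq_mul_max_rpow_neg hp₀ hC hτ (by positivity)]
    exact min_le_min_right τ (hdecay i)
  have hsummable : Summable fun n : ℕ ↦ C * max ((n : ℝ) + 1) b ^ (-p) :=
    (summable_max_rpow_neg hp hb).mul_left C
  have hmin : Summable fun i ↦ min (a i) τ :=
    .of_nonneg_of_le (fun i ↦ le_min (ha i) hτ.le) hmajorant (hsummable.comp_injective hrank)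
  refine ⟨hmin, ?_⟩
  calc ∑' i, min (a i) τ
      ≤ ∑' n : ℕ, C * max ((n : ℝ) + 1) b ^ (-p) :=
        hmin.tsum_le_tsum_of_inj rank hrank (fun n _ ↦ by positivity) hmajorant hsummable
    _ ≤ C * (p / (p - 1) * b ^ (1 - p)) := by
        rw [tsum_mul_left]
        exact mul_le_mul_of_nonneg_left (tsum_max_rpow_neg_le hp hb) hC.le
    _ = p / (p - 1) * C ^ (1 / p) * τ ^ (1 - 1 / p) := by
        rw [mul_left_comm, mul_div_rpow_one_div_rpow_one_sub hp₀.ne' hC hτ, mul_assoc]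

end CappedSum

theorem sum_min_sq_le_of_sortedDecay_general {ι : Type*} {s c σ : ℝ} (hs : 1 / 2 < s) (hc : 0 < c)
    (hσ : 0 < σ) {μ : ι → ℝ} {rank : ι → ℕ} (hrank : rank.Injective)
    (hμ : ∀ m, |μ m| ≤ c * ((rank m : ℝ) + 1) ^ (-s)) :
    Summable (fun m ↦ min (μ m ^ 2) (σ ^ 2)) ∧
      ∑' m, min (μ m ^ 2) (σ ^ 2) ≤ 2 * s / (2 * s - 1) * c ^ (1 / s) * σ ^ (2 - 1 / s) := by
  have hsq (m : ι) : μ m ^ 2 ≤ c ^ 2 * ((rank m : ℝ) + 1) ^ (-(2 * s)) := by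
    calc μ m ^ 2
        ≤ (c * ((rank m : ℝ) + 1) ^ (-s)) ^ 2 := sq_le_sq.mpr ((hμ m).trans (le_abs_self _))
      _ = c ^ 2 * ((rank m : ℝ) + 1) ^ (-(2 * s)) := by
        rw [mul_pow, ← Real.rpow_mul_natCast (by positivity), Nat.cast_ofNat, neg_mul, mul_comm s]
  have hc_exp : (c ^ 2) ^ (1 / (2 * s)) = c ^ (1 / s) := by
    rw [← Real.rpow_natCast_mul hc.le]
    congr 1
    field_simp
    norm_num
  have hσ_exp : (σ ^ 2) ^ (1 - 1 / (2 * s)) = σ ^ (2 - 1 / s) := by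
    rw [← Real.rpow_natCast_mul hσ.le]
    congr 1
    field_simp
    norm_num
  rw [← hc_exp, ← hσ_exp]
  exact summable_min_and_tsum_min_le_of_le_rpow_neg (by linarith) (by positivity) (by positivity)
    (fun m ↦ sq_nonneg (μ m)) hrank hsq

/-- For `s > 1/2` there is a constant `K` (depending only on `s, c₁, c₂`)
such that for all `d ≥ 1`, `0 < σ ≤ c₁`, and `μ` with sorted coefficients decaying as
`r^{−s}`, one has `∑_m min(μ[m]², σ²) ≤ K σ^{2 − 1/s}`. -/
theorem sum_min_sq_le_of_sortedDecay
    (s c₁ c₂ : ℝ) (hs : 1 / 2 < s) (hc₁ : 0 < c₁) (hc₂ : 0 < c₂) :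
    ∃ K > 0, ∀ d : ℕ, 1 ≤ d → ∀ σ : ℝ, 0 < σ → σ ≤ c₁ →
      ∀ μ : Fin d → ℝ, sortedDecay s c₁ c₂ μ →
        ∑ m, min ((μ m) ^ 2) (σ ^ 2) ≤ K * σ ^ (2 - 1 / s) := by
  have hs₀ : 0 < 2 * s - 1 := by linarith
  refine ⟨2 * s / (2 * s - 1) * c₂ ^ (1 / s), by positivity, fun d _ σ hσ _ μ ⟨e, _, he⟩ ↦ ?_⟩
  rw [← tsum_fintype (L := .unconditional _)]
  exact (sum_min_sq_le_of_sortedDecay_general hs hc₂ hσ (rank := fun m ↦ (e.symm m : ℕ))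
    (Fin.val_injective.comp e.symm.injective) fun m ↦ by simpa using (he (e.symm m)).2).2
end

section
/- Let s > 1/2 and C₁, C₂ > 0. There exists a constant K > 0, depending only on s, C₁ and C₂, such that for every integer d ≥ 4, every σ with 0 < σ ≤ C₁, every orthogonal matrix F ∈ ℝ^{d×d}, and every μ ∈ ℝ^d such that the sorted coefficients of Fμ satisfy C₁ r^{−s} ≤ |(Fμ)^{(r)}| ≤ C₂ r^{−s} for all 1 ≤ r ≤ d, the map Φ(x) = Fᵀ ρ_t(F x), with ρ_t the soft-thresholding with threshold λ = σ √(2 log d), satisfies both E[‖Φ(x) − μ‖²] ≤ K σ^{2 − 1/s} log d and ‖E[Φ(x)] − μ‖² ≤ K σ^{2 − 1/s} log d, where x is distributed as N(μ, σ² I_d). -/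
/-!
If `w = u - m` is the noise in one frame coefficient, soft-thresholding at level `l` errs by at
most `2 * min l |m| + |softThresh l w|`. Pure noise rarely exceeds `l = σ √(2 log n)`, and
`E (softThresh l w) ^ 2 ≤ 2 σ² / n` already for sub-Gaussian `w`, so each coefficient has risk at
most a multiple of `log n * (min σ² m² + σ² / n)`. When the sorted `|m|` are dominated by
`C r ^ (-s)` with `2 s > 1`, only the ranks `r ≲ (C / σ) ^ (1 / s)` contribute about `σ²` to the sum
of the `min σ² m²`, and the tail is a convergent `p`-series of the same order. The synthesis map
`Fᵀ` of a tight frame is a contraction, so it does not increase the risk, and the squared bias is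
at most the risk by Jensen's inequality.
-/

open Matrix MeasureTheory ProbabilityTheory

/-- The Gaussian measure `N(m, σ² I_d)` on `ℝ^d`, as a product of one-dimensional
Gaussian measures. -/
noncomputable def gaussPi (d : ℕ) (m : Fin d → ℝ) (σ : ℝ) : Measure (Fin d → ℝ) :=
  Measure.pi fun i => gaussianReal (m i) (Real.toNNReal (σ ^ 2))

/-- Soft-thresholding with threshold `lam`: `ρ_t(u) = sign(u) · max(|u| − lam, 0)`. -/
noncomputable def softThresh (lam u : ℝ) : ℝ :=
  Real.sign u * max (|u| - lam) 0

section SoftThreshold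

variable {l : ℝ}

theorem softThresh_eq_sub (hl : 0 ≤ l) (u : ℝ) :
    softThresh l u = max (u - l) 0 - max (-u - l) 0 := by
  unfold softThresh
  rcases lt_trichotomy u 0 with h | rfl | h
  · rw [Real.sign_of_neg h, abs_of_neg h, max_eq_right (show u - l ≤ 0 by linarith)]; ring
  · simp
  · rw [Real.sign_of_pos h, abs_of_pos h, max_eq_right (show -u - l ≤ 0 by linarith)]; ring

theorem continuous_softThresh (hl : 0 ≤ l) : Continuous (softThresh l) := by
  simp_rw [funext (softThresh_eq_sub hl)]
  fun_prop

theorem abs_softThresh_le (l u : ℝ) : |softThresh l u| ≤ max (|u| - l) 0 := by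
  rw [softThresh, abs_mul, abs_of_nonneg (le_max_right (|u| - l) 0)]
  refine mul_le_of_le_one_left (le_max_right _ _) ?_
  rcases Real.sign_apply_eq u with h | h | h <;> simp [h]

theorem abs_softThresh_sub_self_le (hl : 0 ≤ l) (u : ℝ) : |softThresh l u - u| ≤ l := by
  rw [softThresh_eq_sub hl, abs_le]
  grind

theorem abs_softThresh_sub_softThresh_le (hl : 0 ≤ l) (u v : ℝ) :
    |softThresh l u - softThresh l v| ≤ |u - v| := by
  rw [softThresh_eq_sub hl, softThresh_eq_sub hl]
  grind

theorem sq_softThresh_sub_le (hl : 0 ≤ l) (u m : ℝ) :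
    (softThresh l u - m) ^ 2 ≤ 8 * min (l ^ 2) (m ^ 2) + 2 * softThresh l (u - m) ^ 2 := by
  set b := softThresh l u - m - softThresh l (u - m) with hb
  have b_le_level : |b| ≤ 2 * l := by
    have h₁ := abs_softThresh_sub_self_le hl u
    have h₂ := abs_softThresh_sub_self_le hl (u - m)
    grind
  have b_le_signal : |b| ≤ 2 * |m| := by
    have h := abs_softThresh_sub_softThresh_le hl u (u - m)
    grind
  have hb_sq : b ^ 2 ≤ 4 * min (l ^ 2) (m ^ 2) := by
    rw [mul_min_of_nonneg _ _ (by norm_num), le_min_iff, ← sq_abs b, ← sq_abs m]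
    constructor <;> nlinarith [abs_nonneg b]
  have hsplit := add_sq_le (a := b) (b := softThresh l (u - m))
  rw [hb, sub_add_cancel] at hsplit
  linarith

theorem sq_softThresh_le_exp {c : ℝ} (hc : 0 < c) (hl : 0 ≤ l) (hcl : 2 * c ≤ l ^ 2) (u : ℝ) :
    softThresh l u ^ 2 ≤ c * Real.exp (l / c * (|u| - l)) := by
  have hsq : softThresh l u ^ 2 ≤ max (|u| - l) 0 ^ 2 :=
    sq_le_sq' (by linarith [neg_abs_le (softThresh l u), abs_softThresh_le l u])
      ((le_abs_self _).trans (abs_softThresh_le l u))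
  refine hsq.trans ?_
  rcases le_total (|u| - l) 0 with hul | hul
  · rw [max_eq_right hul, zero_pow two_ne_zero]
    positivity
  rw [max_eq_left hul]
  set x := l / c * (|u| - l) with hx
  have hx₀ : 0 ≤ x := by positivity
  calc (|u| - l) ^ 2 = 2 * c / 2 * (|u| - l) ^ 2 / c := by field_simp
    _ ≤ l ^ 2 / 2 * (|u| - l) ^ 2 / c := by gcongr
    _ = c * (x ^ 2 / 2) := by rw [hx]; field_simp
    _ ≤ c * Real.exp x := by
      gcongr
      linarith [Real.quadratic_le_exp_of_nonneg hx₀]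

end SoftThreshold

section SubGaussian

open scoped NNReal

variable {Ω : Type*} [MeasurableSpace Ω] {P : Measure Ω} {c : ℝ≥0}

theorem integral_exp_mul_abs_le_of_hasSubgaussianMGF {W : Ω → ℝ} (hW : HasSubgaussianMGF W c P)
    (t : ℝ) : ∫ ω, Real.exp (t * |W ω|) ∂P ≤ 2 * Real.exp (c * t ^ 2 / 2) := by
  have hpos := hW.integrable_exp_mul t
  have hneg := hW.integrable_exp_mul (-t)
  calc ∫ ω, Real.exp (t * |W ω|) ∂P
      ≤ ∫ ω, (Real.exp (t * W ω) + Real.exp (-t * W ω)) ∂P := by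
        refine integral_mono (integrable_exp_mul_abs hpos hneg) (hpos.add hneg) fun ω => ?_
        have h₁ := Real.exp_pos (t * W ω)
        have h₂ := Real.exp_pos (-t * W ω)
        rcases abs_cases (W ω) with ⟨h, -⟩ | ⟨h, -⟩
        · simp only [h]; linarith
        · simp only [h, mul_neg, ← neg_mul]; linarith
    _ = mgf W P t + mgf W P (-t) := integral_add hpos hneg
    _ ≤ Real.exp (c * t ^ 2 / 2) + Real.exp (c * (-t) ^ 2 / 2) :=
        add_le_add (hW.mgf_le t) (hW.mgf_le (-t))
    _ = 2 * Real.exp (c * t ^ 2 / 2) := by rw [neg_sq, two_mul]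

theorem hasSubgaussianMGF_sub_gaussianReal (m : ℝ) (v : ℝ≥0) :
    HasSubgaussianMGF (fun x => x - m) v (gaussianReal m v) := by
  have hcentred : (gaussianReal m v).map (fun x => x - m) = gaussianReal 0 v := by
    rw [gaussianReal_map_sub_const, sub_self]
  rw [← HasSubgaussianMGF.id_map_iff (by fun_prop), hcentred]
  exact ⟨fun t => integrable_exp_mul_gaussianReal t, fun t => by simp [mgf_id_gaussianReal]⟩

theorem hasSubgaussianMGF_dotProduct_of_iIndepFun {ι : Type*} [Fintype ι] {Z : Ω → ι → ℝ}
    (hindep : iIndepFun (fun i ω => Z ω i) P)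
    (hZ : ∀ i, HasSubgaussianMGF (fun ω => Z ω i) c P) {a : ι → ℝ} (ha : a ⬝ᵥ a ≤ 1) :
    HasSubgaussianMGF (fun ω => a ⬝ᵥ Z ω) c P := by
  have hsum : HasSubgaussianMGF (fun ω => a ⬝ᵥ Z ω)
      (∑ i, NNReal.mk (a i ^ 2) (sq_nonneg (a i)) * c) P :=
    HasSubgaussianMGF.sum_of_iIndepFun
      (hindep.comp (fun i x => a i * x) fun i => measurable_const_mul (a i))
      fun i _ => (hZ i).const_mul (a i)
  refine ⟨hsum.integrable_exp_mul, fun t => (hsum.mgf_le t).trans ?_⟩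
  have hproxy : ((∑ i, NNReal.mk (a i ^ 2) (sq_nonneg (a i)) * c : ℝ≥0) : ℝ) ≤ c := by
    rw [← Finset.sum_mul, NNReal.coe_mul, NNReal.coe_sum]
    refine mul_le_of_le_one_left c.2 (le_trans (le_of_eq ?_) ha)
    simp [dotProduct, sq]
  gcongr

theorem hasSubgaussianMGF_dotProduct_sub_pi_gaussianReal {ι : Type*} [Fintype ι] (m : ι → ℝ)
    (v : ℝ≥0) {a : ι → ℝ} (ha : a ⬝ᵥ a ≤ 1) :
    HasSubgaussianMGF (fun x => a ⬝ᵥ (x - m)) v (Measure.pi fun i => gaussianReal (m i) v) :=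
  have hcoord (i : ι) : HasSubgaussianMGF (fun x : ι → ℝ => (x - m) i) v
      (Measure.pi fun i => gaussianReal (m i) v) :=
    HasSubgaussianMGF.of_map (Y := Function.eval i) (measurable_pi_apply i).aemeasurable <| by
      rw [(measurePreserving_eval (fun i => gaussianReal (m i) v) i).map_eq]
      exact hasSubgaussianMGF_sub_gaussianReal (m i) v
  hasSubgaussianMGF_dotProduct_of_iIndepFun
    (iIndepFun_pi (μ := fun i => gaussianReal (m i) v) (X := fun i y => y - m i)
      fun _ => by fun_prop) hcoord ha

end SubGaussian

section CoefficientRisk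

open scoped NNReal

variable {Ω : Type*} [MeasurableSpace Ω] {P : Measure Ω} {l m : ℝ} {c : ℝ≥0}

theorem integral_sq_softThresh_le {W : Ω → ℝ} (hc : 0 < c) (hl : 0 ≤ l) (hcl : 2 * c ≤ l ^ 2)
    (hW : HasSubgaussianMGF W c P) :
    ∫ ω, softThresh l (W ω) ^ 2 ∂P ≤ 2 * c * Real.exp (-l ^ 2 / (2 * c)) := by
  have hint : Integrable (fun ω => Real.exp (l / c * |W ω|)) P :=
    integrable_exp_mul_abs (hW.integrable_exp_mul _) (hW.integrable_exp_mul _)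
  have hpoint (ω : Ω) :
      softThresh l (W ω) ^ 2 ≤ c * Real.exp (-l ^ 2 / c) * Real.exp (l / c * |W ω|) := by
    refine (sq_softThresh_le_exp (NNReal.coe_pos.2 hc) hl hcl (W ω)).trans_eq ?_
    rw [mul_assoc, ← Real.exp_add]
    ring_nf
  calc ∫ ω, softThresh l (W ω) ^ 2 ∂P
      ≤ ∫ ω, c * Real.exp (-l ^ 2 / c) * Real.exp (l / c * |W ω|) ∂P :=
        integral_mono_of_nonneg (ae_of_all _ fun ω => sq_nonneg _) (hint.const_mul _)
          (ae_of_all _ hpoint)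
    _ = c * Real.exp (-l ^ 2 / c) * ∫ ω, Real.exp (l / c * |W ω|) ∂P := integral_const_mul _ _
    _ ≤ c * Real.exp (-l ^ 2 / c) * (2 * Real.exp (c * (l / c) ^ 2 / 2)) := by
        gcongr
        exact integral_exp_mul_abs_le_of_hasSubgaussianMGF hW _
    _ = 2 * c * Real.exp (-l ^ 2 / (2 * c)) := by
        rw [mul_left_comm, mul_assoc, ← Real.exp_add, ← mul_assoc]
        congr 2
        field_simp
        ring

variable [IsProbabilityMeasure P]

theorem memLp_softThresh_sub {U : Ω → ℝ} (hl : 0 ≤ l)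
    (hU : HasSubgaussianMGF (fun ω => U ω - m) c P) :
    MemLp (fun ω => softThresh l (U ω) - m) 2 P := by
  have hmeas : AEStronglyMeasurable U P := by
    simpa using hU.aestronglyMeasurable.add_const m
  have hbias : MemLp (fun ω => softThresh l (U ω) - U ω) 2 P :=
    MemLp.of_bound (((continuous_softThresh hl).comp_aestronglyMeasurable hmeas).sub hmeas) l
      (ae_of_all _ fun ω => abs_softThresh_sub_self_le hl (U ω))
  exact (hbias.add (hU.memLp 2)).ae_eq (ae_of_all _ fun _ => sub_add_sub_cancel _ _ _)

theorem integral_sq_softThresh_sub_le {U : Ω → ℝ} (hc : 0 < c) (hl : 0 ≤ l)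
    (hcl : 2 * c ≤ l ^ 2) (hU : HasSubgaussianMGF (fun ω => U ω - m) c P) :
    ∫ ω, (softThresh l (U ω) - m) ^ 2 ∂P ≤
      8 * min (l ^ 2) (m ^ 2) + 4 * c * Real.exp (-l ^ 2 / (2 * c)) := by
  have hnoise : Integrable (fun ω => softThresh l (U ω - m) ^ 2) P := by
    simpa using (memLp_softThresh_sub (m := 0) hl (by simpa using hU)).integrable_sq
  calc ∫ ω, (softThresh l (U ω) - m) ^ 2 ∂P
      ≤ ∫ ω, (8 * min (l ^ 2) (m ^ 2) + 2 * softThresh l (U ω - m) ^ 2) ∂P :=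
        integral_mono (memLp_softThresh_sub hl hU).integrable_sq
          ((integrable_const _).add (hnoise.const_mul 2)) fun ω => sq_softThresh_sub_le hl (U ω) m
    _ = 8 * min (l ^ 2) (m ^ 2) + 2 * ∫ ω, softThresh l (U ω - m) ^ 2 ∂P := by
        rw [integral_add (integrable_const _) (hnoise.const_mul 2), integral_const,
          probReal_univ, one_smul, integral_const_mul]
    _ ≤ 8 * min (l ^ 2) (m ^ 2) + 2 * (2 * c * Real.exp (-l ^ 2 / (2 * c))) := by
        gcongr
        exact integral_sq_softThresh_le hc hl hcl hU
    _ = 8 * min (l ^ 2) (m ^ 2) + 4 * c * Real.exp (-l ^ 2 / (2 * c)) := by ring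

theorem one_le_log_natCast {n : ℕ} (hn : 3 ≤ n) : 1 ≤ Real.log n := by
  have hn' : (3 : ℝ) ≤ n := by exact_mod_cast hn
  rw [Real.le_log_iff_exp_le (by linarith)]
  linarith [Real.exp_one_lt_three]

theorem integral_sq_softThresh_sqrt_log_sub_le {U : Ω → ℝ} {σ : ℝ} (hσ : 0 < σ) {n : ℕ}
    (hn : 3 ≤ n) (hU : HasSubgaussianMGF (fun ω => U ω - m) (σ ^ 2).toNNReal P) :
    ∫ ω, (softThresh (σ * √(2 * Real.log n)) (U ω) - m) ^ 2 ∂P ≤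
      16 * (min (σ ^ 2) (m ^ 2) + σ ^ 2 / n) * Real.log n := by
  have hlog := one_le_log_natCast hn
  have hlevel : (σ * √(2 * Real.log n)) ^ 2 = 2 * Real.log n * σ ^ 2 := by
    rw [mul_pow, Real.sq_sqrt (by linarith), mul_comm]
  have hproxy : (((σ ^ 2).toNNReal : ℝ≥0) : ℝ) = σ ^ 2 := Real.coe_toNNReal _ (sq_nonneg σ)
  have hrisk := integral_sq_softThresh_sub_le (l := σ * √(2 * Real.log n))
    (Real.toNNReal_pos.2 (by positivity)) (by positivity)
    (by rw [hproxy, hlevel]; nlinarith [sq_nonneg σ]) hU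
  have hexp : Real.exp (-(2 * Real.log n * σ ^ 2) / (2 * σ ^ 2)) = (n : ℝ)⁻¹ := by
    rw [← Real.exp_log (x := n) (by positivity), ← Real.exp_neg, Real.log_exp]
    congr 1
    field_simp
  have hmin : min (2 * Real.log n * σ ^ 2) (m ^ 2) ≤ 2 * Real.log n * min (σ ^ 2) (m ^ 2) := by
    rw [mul_min_of_nonneg _ _ (by linarith)]
    exact min_le_min_left _ (le_mul_of_one_le_left (sq_nonneg m) (by linarith))
  rw [hproxy, hlevel, hexp] at hrisk
  calc ∫ ω, (softThresh (σ * √(2 * Real.log n)) (U ω) - m) ^ 2 ∂P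
      ≤ 8 * min (2 * Real.log n * σ ^ 2) (m ^ 2) + 4 * σ ^ 2 * (n : ℝ)⁻¹ := hrisk
    _ ≤ 8 * (2 * Real.log n * min (σ ^ 2) (m ^ 2)) + 16 * σ ^ 2 * (n : ℝ)⁻¹ * Real.log n := by
        gcongr 8 * ?_ + ?_
        refine (mul_le_mul_of_nonneg_right ?_ (by positivity)).trans
          (le_mul_of_one_le_right (by positivity) hlog)
        gcongr
        norm_num
    _ = 16 * (min (σ ^ 2) (m ^ 2) + σ ^ 2 / n) * Real.log n := by ring

end CoefficientRisk

section PolynomialDecay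

variable {p N : ℝ}

theorem sum_range_rpow_neg_le (hp : 1 < p) (hN : 0 < N) (n : ℕ) :
    ∑ r ∈ Finset.range n, (N + (r + 1)) ^ (-p) ≤ N ^ (1 - p) / (p - 1) := by
  have hanti : AntitoneOn (fun x : ℝ => x ^ (-p)) (Set.Icc N (N + n)) := fun x hx y _ hxy =>
    Real.rpow_le_rpow_of_nonpos (hN.trans_le hx.1) hxy (by linarith)
  have hzero : (0 : ℝ) ∉ Set.uIcc N (N + n) := by
    rw [Set.uIcc_of_le (by simp)]
    exact fun h => hN.not_ge h.1
  have : 0 < p - 1 := by linarith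
  calc ∑ r ∈ Finset.range n, (N + (r + 1)) ^ (-p)
      ≤ ∫ x in N..N + n, x ^ (-p) := by simpa using hanti.sum_le_integral
    _ = (N ^ (1 - p) - (N + n) ^ (1 - p)) / (p - 1) := by
        rw [integral_rpow (Or.inr ⟨by linarith, hzero⟩), ← neg_div_neg_eq]
        ring_nf
    _ ≤ N ^ (1 - p) / (p - 1) := by
        gcongr
        exact sub_le_self _ (by positivity)

theorem min_one_rpow_div_le (hp : 0 ≤ p) (hN : 0 < N) {r : ℝ} (hr : 0 < r) :
    min 1 ((N / r) ^ p) ≤ (2 * N / (N + r)) ^ p := by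
  rcases le_total r N with h | h
  · refine (min_le_left _ _).trans (Real.one_le_rpow ?_ hp)
    rw [one_le_div (by positivity)]
    linarith
  · refine (min_le_right _ _).trans (Real.rpow_le_rpow (by positivity) ?_ hp)
    rw [div_le_div_iff₀ hr (by positivity)]
    nlinarith

theorem sum_range_min_one_rpow_div_le (hp : 1 < p) (hN : 0 < N) (n : ℕ) :
    ∑ r ∈ Finset.range n, min 1 ((N / (r + 1)) ^ p) ≤ 2 ^ p / (p - 1) * N := by
  calc ∑ r ∈ Finset.range n, min 1 ((N / (r + 1)) ^ p)
      ≤ ∑ r ∈ Finset.range n, (2 * N) ^ p * (N + (r + 1)) ^ (-p) := by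
        refine Finset.sum_le_sum fun r _ => ?_
        refine (min_one_rpow_div_le (by linarith) hN (by positivity)).trans_eq ?_
        rw [Real.div_rpow (by positivity) (by positivity), Real.rpow_neg (by positivity),
          div_eq_mul_inv]
    _ = (2 * N) ^ p * ∑ r ∈ Finset.range n, (N + (r + 1)) ^ (-p) := (Finset.mul_sum ..).symm
    _ ≤ (2 * N) ^ p * (N ^ (1 - p) / (p - 1)) := by
        gcongr
        exact sum_range_rpow_neg_le hp hN n
    _ = 2 ^ p / (p - 1) * (N ^ p * N ^ (1 - p)) := by
        rw [Real.mul_rpow zero_le_two hN.le]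
        ring
    _ = 2 ^ p / (p - 1) * N := by rw [← Real.rpow_add hN, add_sub_cancel, Real.rpow_one]

theorem sum_min_sq_le_of_abs_le_rpow {s C σ : ℝ} (hs : 1 / 2 < s) (hC : 0 < C) (hσ : 0 < σ)
    {n : ℕ} {z : Fin n → ℝ} (e : Equiv.Perm (Fin n))
    (hz : ∀ r : Fin n, |z (e r)| ≤ C * ((r : ℝ) + 1) ^ (-s)) :
    ∑ i, min (σ ^ 2) (z i ^ 2) ≤
      2 ^ (2 * s) / (2 * s - 1) * C ^ (1 / s) * σ ^ (2 - 1 / s) := by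
  have hs₀ : 0 < s := by linarith
  -- The critical rank, where the envelope `C * r ^ (-s)` crosses the noise level `σ`.
  set N := (C / σ) ^ (1 / s) with hN
  have hNs : N ^ s = C / σ := by
    rw [hN, ← Real.rpow_mul (by positivity), one_div_mul_cancel hs₀.ne', Real.rpow_one]
  have hσN : σ ^ 2 * N = C ^ (1 / s) * σ ^ (2 - 1 / s) := by
    rw [hN, Real.div_rpow hC.le hσ.le, Real.rpow_sub hσ, Real.rpow_two]
    ring
  have hterm (r : Fin n) :
      min (σ ^ 2) (z (e r) ^ 2) ≤ σ ^ 2 * min 1 ((N / (r + 1)) ^ (2 * s)) := by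
    have henvelope : C * ((r : ℝ) + 1) ^ (-s) = σ * (N / (r + 1)) ^ s := by
      rw [Real.div_rpow (by positivity) (by positivity), hNs, Real.rpow_neg (by positivity)]
      field_simp
    rw [mul_min_of_nonneg _ _ (sq_nonneg σ), mul_one, mul_comm 2 s,
      Real.rpow_mul (by positivity), Real.rpow_two, ← mul_pow, ← henvelope, ← sq_abs (z (e r))]
    gcongr
    exact hz r
  calc ∑ i, min (σ ^ 2) (z i ^ 2)
      = ∑ r, min (σ ^ 2) (z (e r) ^ 2) := (Equiv.sum_comp e _).symm
    _ ≤ ∑ r : Fin n, σ ^ 2 * min 1 ((N / (r + 1)) ^ (2 * s)) :=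
        Finset.sum_le_sum fun r _ => hterm r
    _ = σ ^ 2 * ∑ r ∈ Finset.range n, min 1 ((N / (r + 1)) ^ (2 * s)) := by
        rw [← Finset.mul_sum, ← Fin.sum_univ_eq_sum_range]
    _ ≤ σ ^ 2 * (2 ^ (2 * s) / (2 * s - 1) * N) := by
        gcongr
        exact sum_range_min_one_rpow_div_le (by linarith) (by positivity) n
    _ = 2 ^ (2 * s) / (2 * s - 1) * C ^ (1 / s) * σ ^ (2 - 1 / s) := by
        rw [mul_left_comm, hσN, mul_assoc]

end PolynomialDecay

section TightFrame

variable {ι κ : Type*} [Fintype ι] [Fintype κ] [DecidableEq κ] {F : Matrix ι κ ℝ}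

theorem transpose_mulVec_dotProduct_self_le (hF : Fᵀ * F = 1) (v : ι → ℝ) :
    (Fᵀ *ᵥ v) ⬝ᵥ (Fᵀ *ᵥ v) ≤ v ⬝ᵥ v := by
  set w := Fᵀ *ᵥ v
  have hcross : v ⬝ᵥ (F *ᵥ w) = w ⬝ᵥ w := by
    rw [dotProduct_mulVec, ← mulVec_transpose]
  have hisometry : (F *ᵥ w) ⬝ᵥ (F *ᵥ w) = w ⬝ᵥ w := by
    rw [dotProduct_mulVec, ← mulVec_transpose, mulVec_mulVec, hF, one_mulVec]
  have hresidual : 0 ≤ (v - F *ᵥ w) ⬝ᵥ (v - F *ᵥ w) :=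
    Finset.sum_nonneg fun i _ => mul_self_nonneg _
  rw [dotProduct_sub, sub_dotProduct, sub_dotProduct, dotProduct_comm (F *ᵥ w) v, hcross,
    hisometry] at hresidual
  linarith

theorem row_dotProduct_self_le_one (hF : Fᵀ * F = 1) (i : ι) : F.row i ⬝ᵥ F.row i ≤ 1 := by
  classical
  simpa using transpose_mulVec_dotProduct_self_le hF (Pi.single i 1)

/-- The tight frame soft-thresholding estimator `Φ(x) = Fᵀ ρ_t(F x)`, for a frame whose vectors are
the rows of `F`; tightness is the separate condition `Fᵀ * F = 1`. -/
noncomputable def frameSoftThresh (F : Matrix ι κ ℝ) (l : ℝ) (x : κ → ℝ) : κ → ℝ :=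
  Fᵀ *ᵥ fun i => softThresh l ((F *ᵥ x) i)

theorem frameSoftThresh_sub (hF : Fᵀ * F = 1) (l : ℝ) (x μ : κ → ℝ) :
    frameSoftThresh F l x - μ = Fᵀ *ᵥ fun i => softThresh l ((F *ᵥ x) i) - (F *ᵥ μ) i := by
  have hμ : Fᵀ *ᵥ (F *ᵥ μ) = μ := by rw [mulVec_mulVec, hF, one_mulVec]
  conv_lhs => rw [← hμ]
  exact (mulVec_sub ..).symm

theorem sum_sq_frameSoftThresh_sub_le (hF : Fᵀ * F = 1) (l : ℝ) (x μ : κ → ℝ) :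
    ∑ j, (frameSoftThresh F l x j - μ j) ^ 2 ≤
      ∑ i, (softThresh l ((F *ᵥ x) i) - (F *ᵥ μ) i) ^ 2 := by
  have h := transpose_mulVec_dotProduct_self_le hF
    fun i => softThresh l ((F *ᵥ x) i) - (F *ᵥ μ) i
  rw [← frameSoftThresh_sub hF] at h
  simpa only [dotProduct, Pi.sub_apply, ← sq] using h

end TightFrame

section Risk

open scoped NNReal

variable {Ω : Type*} [MeasurableSpace Ω] {P : Measure Ω} [IsProbabilityMeasure P]
  {ι κ : Type*} [Fintype κ]

theorem sq_integral_le_integral_sq {f : Ω → ℝ} (hf : MemLp f 2 P) :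
    (∫ ω, f ω ∂P) ^ 2 ≤ ∫ ω, f ω ^ 2 ∂P := by
  have h := variance_nonneg f P
  rw [variance_eq_sub hf] at h
  exact sub_nonneg.1 h

theorem sum_sq_integral_sub_le {Y : Ω → κ → ℝ} {μ : κ → ℝ}
    (hY : ∀ j, MemLp (fun ω => Y ω j - μ j) 2 P) :
    ∑ j, ((∫ ω, Y ω ∂P) j - μ j) ^ 2 ≤ ∫ ω, ∑ j, (Y ω j - μ j) ^ 2 ∂P := by
  have hint (j : κ) : Integrable (fun ω => Y ω j) P := by
    simpa using (integrable_add_iff_integrable_left' (integrable_const (-μ j))).1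
      ((hY j).integrable one_le_two)
  rw [integral_finsetSum _ fun j _ => (hY j).integrable_sq]
  refine Finset.sum_le_sum fun j _ => ?_
  have hmean : (∫ ω, Y ω ∂P) j - μ j = ∫ ω, (Y ω j - μ j) ∂P := by
    rw [eval_integral hint, integral_sub (hint j) (integrable_const _)]
    simp
  rw [hmean]
  exact sq_integral_le_integral_sq (hY j)

variable {F : Matrix ι κ ℝ} {l : ℝ} {c : ℝ≥0} {X : Ω → κ → ℝ} {μ : κ → ℝ}

theorem memLp_softThresh_mulVec_sub (hl : 0 ≤ l) {i : ι}
    (hX : HasSubgaussianMGF (fun ω => (F *ᵥ (X ω - μ)) i) c P) :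
    MemLp (fun ω => softThresh l ((F *ᵥ X ω) i) - (F *ᵥ μ) i) 2 P :=
  memLp_softThresh_sub hl <| by simpa only [mulVec_sub, Pi.sub_apply] using hX

variable [Fintype ι] [DecidableEq κ]

theorem memLp_frameSoftThresh_sub (hF : Fᵀ * F = 1) (hl : 0 ≤ l)
    (hX : ∀ i, HasSubgaussianMGF (fun ω => (F *ᵥ (X ω - μ)) i) c P) (j : κ) :
    MemLp (fun ω => frameSoftThresh F l (X ω) j - μ j) 2 P := by
  have h (ω : Ω) : frameSoftThresh F l (X ω) j - μ j =
      ∑ i, F i j * (softThresh l ((F *ᵥ X ω) i) - (F *ᵥ μ) i) :=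
    congrFun (frameSoftThresh_sub hF l (X ω) μ) j
  simp_rw [h]
  exact memLp_finsetSum _ fun i _ => (memLp_softThresh_mulVec_sub hl (hX i)).const_mul _

theorem integral_sum_sq_frameSoftThresh_sub_le (hF : Fᵀ * F = 1) (hl : 0 ≤ l)
    (hX : ∀ i, HasSubgaussianMGF (fun ω => (F *ᵥ (X ω - μ)) i) c P) :
    ∫ ω, ∑ j, (frameSoftThresh F l (X ω) j - μ j) ^ 2 ∂P ≤
      ∑ i, ∫ ω, (softThresh l ((F *ᵥ X ω) i) - (F *ᵥ μ) i) ^ 2 ∂P := by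
  have hint (i : ι) := (memLp_softThresh_mulVec_sub hl (hX i)).integrable_sq
  rw [← integral_finsetSum _ fun i _ => hint i]
  exact integral_mono
    (integrable_finsetSum _ fun j _ => (memLp_frameSoftThresh_sub hF hl hX j).integrable_sq)
    (integrable_finsetSum _ fun i _ => hint i)
    fun ω => sum_sq_frameSoftThresh_sub_le hF l (X ω) μ

end Risk

theorem integral_sum_sq_frameSoftThresh_sub_le_of_abs_le_rpow {Ω κ : Type*} [MeasurableSpace Ω]
    {P : Measure Ω} [IsProbabilityMeasure P] [Fintype κ] [DecidableEq κ] {s C M σ : ℝ}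
    (hs : 1 / 2 < s) (hC : 0 < C) (hσ : 0 < σ) (hσM : σ ≤ M) {n : ℕ} (hn : 3 ≤ n)
    {F : Matrix (Fin n) κ ℝ} (hF : Fᵀ * F = 1) {μ : κ → ℝ} (e : Equiv.Perm (Fin n))
    (hμ : ∀ r : Fin n, |(F *ᵥ μ) (e r)| ≤ C * ((r : ℝ) + 1) ^ (-s)) {X : Ω → κ → ℝ}
    (hX : ∀ i, HasSubgaussianMGF (fun ω => (F *ᵥ (X ω - μ)) i) (σ ^ 2).toNNReal P) :
    ∫ ω, ∑ j, (frameSoftThresh F (σ * √(2 * Real.log n)) (X ω) j - μ j) ^ 2 ∂P ≤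
      16 * (2 ^ (2 * s) / (2 * s - 1) * C ^ (1 / s) + M ^ (1 / s)) * σ ^ (2 - 1 / s) *
        Real.log n := by
  have hlog := one_le_log_natCast hn
  have hσ_sq : σ ^ 2 ≤ M ^ (1 / s) * σ ^ (2 - 1 / s) := by
    calc σ ^ 2 = σ ^ (1 / s) * σ ^ (2 - 1 / s) := by
          rw [← Real.rpow_add hσ, add_sub_cancel, Real.rpow_two]
      _ ≤ M ^ (1 / s) * σ ^ (2 - 1 / s) := by gcongr
  calc ∫ ω, ∑ j, (frameSoftThresh F (σ * √(2 * Real.log n)) (X ω) j - μ j) ^ 2 ∂P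
      ≤ ∑ i, ∫ ω, (softThresh (σ * √(2 * Real.log n)) ((F *ᵥ X ω) i) - (F *ᵥ μ) i) ^ 2 ∂P :=
        integral_sum_sq_frameSoftThresh_sub_le hF (by positivity) hX
    _ ≤ ∑ i, 16 * (min (σ ^ 2) ((F *ᵥ μ) i ^ 2) + σ ^ 2 / n) * Real.log n :=
        Finset.sum_le_sum fun i _ => integral_sq_softThresh_sqrt_log_sub_le hσ hn <| by
          simpa only [mulVec_sub, Pi.sub_apply] using hX i
    _ = 16 * (∑ i, min (σ ^ 2) ((F *ᵥ μ) i ^ 2) + σ ^ 2) * Real.log n := by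
        rw [← Finset.sum_mul, ← Finset.mul_sum, Finset.sum_add_distrib, Fin.sum_const,
          nsmul_eq_mul, mul_div_cancel₀ _ (by positivity)]
    _ ≤ 16 * (2 ^ (2 * s) / (2 * s - 1) * C ^ (1 / s) * σ ^ (2 - 1 / s) +
          M ^ (1 / s) * σ ^ (2 - 1 / s)) * Real.log n := by
        gcongr
        exact sum_min_sq_le_of_abs_le_rpow hs hC hσ e hμ
    _ = 16 * (2 ^ (2 * s) / (2 * s - 1) * C ^ (1 / s) + M ^ (1 / s)) * σ ^ (2 - 1 / s) *
          Real.log n := by ring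

theorem tight_frame_soft_thresholding_estimates_general {s C M : ℝ} (hs : 1 / 2 < s) (hC : 0 < C)
    (hM : 0 ≤ M) :
    ∃ K > 0, ∀ n : ℕ, 3 ≤ n → ∀ σ : ℝ, 0 < σ → σ ≤ M →
      ∀ {κ : Type*} [Fintype κ] [DecidableEq κ] (F : Matrix (Fin n) κ ℝ), Fᵀ * F = 1 →
      ∀ (μ : κ → ℝ) (e : Equiv.Perm (Fin n)),
        (∀ r : Fin n, |(F *ᵥ μ) (e r)| ≤ C * ((r : ℝ) + 1) ^ (-s)) →
      ∀ {Ω : Type*} [MeasurableSpace Ω] (P : Measure Ω) [IsProbabilityMeasure P] (X : Ω → κ → ℝ),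
        (∀ i, HasSubgaussianMGF (fun ω => (F *ᵥ (X ω - μ)) i) (σ ^ 2).toNNReal P) →
        let Φ := frameSoftThresh F (σ * √(2 * Real.log n))
        (∫ ω, ∑ j, (Φ (X ω) j - μ j) ^ 2 ∂P ≤ K * σ ^ (2 - 1 / s) * Real.log n) ∧
        (∑ j, ((∫ ω, Φ (X ω) ∂P) j - μ j) ^ 2 ≤ K * σ ^ (2 - 1 / s) * Real.log n) := by
  have hs' : 0 < 2 * s - 1 := by linarith
  refine ⟨16 * (2 ^ (2 * s) / (2 * s - 1) * C ^ (1 / s) + M ^ (1 / s)), by positivity, ?_⟩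
  intro n hn σ hσ hσM κ _ _ F hF μ e hμ Ω _ P _ X hX Φ
  have hrisk := integral_sum_sq_frameSoftThresh_sub_le_of_abs_le_rpow hs hC hσ hσM hn hF e hμ hX
  exact ⟨hrisk, (sum_sq_integral_sub_le
    (memLp_frameSoftThresh_sub hF (by positivity) hX)).trans hrisk⟩

/-- For `s > 1/2` there is a constant `K` (depending only on `s, c₁, c₂`)
such that for all `d ≥ 4`, `0 < σ ≤ c₁`, orthogonal `F`, and `μ` with `Fμ` having sorted
coefficients decaying as `r^{−s}`, the tight frame soft-thresholding
`Φ(x) = Fᵀ ρ_t(F x)` at threshold `λ = σ √(2 log d)` applied to `x ~ N(μ, σ² I_d)`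
satisfies `E[‖Φ(x) − μ‖²] ≤ K σ^{2−1/s} log d` and `‖E[Φ(x)] − μ‖² ≤ K σ^{2−1/s} log d`. -/
theorem tight_frame_soft_thresholding_estimates
    (s c₁ c₂ : ℝ) (hs : 1 / 2 < s) (hc₁ : 0 < c₁) (hc₂ : 0 < c₂) :
    ∃ K > 0, ∀ d : ℕ, 4 ≤ d → ∀ σ : ℝ, 0 < σ → σ ≤ c₁ →
      ∀ F : Matrix (Fin d) (Fin d) ℝ, Fᵀ * F = 1 →
      ∀ μ : Fin d → ℝ, sortedDecay s c₁ c₂ (F.mulVec μ) →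
      ∀ Φ : (Fin d → ℝ) → (Fin d → ℝ),
        Φ = (fun x => Fᵀ.mulVec fun i =>
          softThresh (σ * Real.sqrt (2 * Real.log d)) (F.mulVec x i)) →
        (∫ x, ∑ i, (Φ x i - μ i) ^ 2 ∂(gaussPi d μ σ) ≤ K * σ ^ (2 - 1 / s) * Real.log d) ∧
        (∑ i, ((∫ x, Φ x ∂(gaussPi d μ σ)) i - μ i) ^ 2 ≤ K * σ ^ (2 - 1 / s) * Real.log d) := by
  obtain ⟨K, hK, h⟩ := tight_frame_soft_thresholding_estimates_general hs hc₂ hc₁.le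
  refine ⟨K, hK, ?_⟩
  rintro d hd σ hσ hσc F hF μ ⟨e, -, he⟩ Φ rfl
  exact h d (by lia) σ hσ hσc F hF μ e (fun r => (he r).2) (Measure.pi _) id fun i =>
    hasSubgaussianMGF_dotProduct_sub_pi_gaussianReal μ _ (row_dotProduct_self_le_one hF i)
end

section
/- Let s > 1/2 and C₁, C₂ > 0. There exists a constant K > 0, depending only on s, C₁ and C₂, such that the following holds. Let d ≥ 4, 0 < σ ≤ C₁, F ∈ ℝ^{d×d} orthogonal, and for each class c ∈ {1, …, C} let ν_c = ∑_{k=1}^{K_c} π_{c,k} N(μ_{c,k}, σ² I_d) be a Gaussian mixture with π_{c,k} ≥ 0, ∑_k π_{c,k} = 1, class mean μ_c = ∑_k π_{c,k} μ_{c,k}, and suppose every mixture center satisfies the decay condition C₁ r^{−s} ≤ |(F μ_{c,k})^{(r)}| ≤ C₂ r^{−s} for all 1 ≤ r ≤ d. Let Φ(x) = Fᵀ ρ_t(F x) with soft-threshold λ = σ √(2 log d) and μ̄_c = ∫ Φ(x) dν_c(x). Then for every class c, ‖μ_c − μ̄_c‖² ≤ K σ^{2 − 1/s} log d. -/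
open Matrix MeasureTheory ProbabilityTheory

/-!
Soft-thresholding differs from the identity by clipping to `[-λ, λ]`, and `FᵀF = 1`, so
`Φ(x) = x - Fᵀ clip(F x)`. A Gaussian is symmetric about its center, hence has the center as mean,
and the displacement of the center is `Fᵀ E[clip(F X)]`, where `Fᵀ` does not increase the Euclidean
norm. Clipping is odd, `1`-Lipschitz and bounded by `λ`; averaging over the reflection in the center
`m` gives `|E[clip((F X)ᵢ)]| ≤ min |(F m)ᵢ| λ`. Under power decay the squares of these minima sum to
`O(λ ^ (2 - 1 / s))`, by comparison with `∫₀^∞ min (λ², C² x ^ (-2s)) dx`. Convexity of the squared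
norm extends the bound from a single Gaussian to the mixture.
-/

section Clip

/-- Projection of `u` onto the interval `[-lam, lam]`; it is the part of `u` that soft-thresholding
removes. -/
def clip (lam u : ℝ) : ℝ :=
  max (-lam) (min lam u)

variable {lam : ℝ}

lemma abs_clip_le (hlam : 0 ≤ lam) (u : ℝ) : |clip lam u| ≤ lam :=
  abs_le.2 ⟨le_max_left _ _, max_le (by linarith) (min_le_left _ _)⟩

lemma lipschitzWith_clip (lam : ℝ) : LipschitzWith 1 (clip lam) :=
  (LipschitzWith.id.const_min lam).const_max (-lam)

lemma odd_clip (hlam : 0 ≤ lam) : (clip lam).Odd := fun u => by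
  grind [clip]

lemma softThresh_eq_sub_clip (hlam : 0 ≤ lam) (u : ℝ) : softThresh lam u = u - clip lam u := by
  rcases lt_trichotomy u 0 with hu | rfl | hu
  · rw [softThresh, Real.sign_of_neg hu, abs_of_neg hu]
    grind [clip]
  · simp [softThresh, clip, hlam]
  · rw [softThresh, Real.sign_of_pos hu, abs_of_pos hu]
    grind [clip]

lemma integrable_clip_comp {α : Type*} [MeasurableSpace α] {P : Measure α} [IsFiniteMeasure P]
    (hlam : 0 ≤ lam) {f : α → ℝ} (hf : AEMeasurable f P) :
    Integrable (fun x => clip lam (f x)) P :=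
  .of_bound ((lipschitzWith_clip lam).continuous.measurable.comp_aemeasurable
    hf).aestronglyMeasurable lam (.of_forall fun _ => abs_clip_le hlam _)

end Clip

section CentralSymmetry

lemma norm_add_apply_two_smul_sub_le {E G : Type*} [NormedAddCommGroup E] [NormedSpace ℝ E]
    [SeminormedAddCommGroup G] {g : E → G} (hodd : g.Odd) {K : NNReal} (hlip : LipschitzWith K g)
    (z y : E) : ‖g y + g ((2 : ℝ) • z - y)‖ ≤ 2 * (K * ‖z‖) :=
  calc ‖g y + g ((2 : ℝ) • z - y)‖ = ‖g y - g (y - (2 : ℝ) • z)‖ := by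
        rw [← neg_sub y, hodd, ← sub_eq_add_neg]
    _ ≤ K * ‖y - (y - (2 : ℝ) • z)‖ := hlip.norm_sub_le _ _
    _ = 2 * (K * ‖z‖) := by
        rw [sub_sub_cancel, norm_smul, Real.norm_ofNat]
        ring

lemma norm_integral_le_of_norm_add_comp_le {α G : Type*} [MeasurableSpace α]
    [NormedAddCommGroup G] [NormedSpace ℝ G] {P : Measure α} [IsProbabilityMeasure P] {T : α → α}
    (hT : MeasurePreserving T P P) {f : α → G} (hf : Integrable f P) {c : ℝ}
    (hc : ∀ x, ‖f x + f (T x)‖ ≤ 2 * c) : ‖∫ x, f x ∂P‖ ≤ c := by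
  have hcomp : ∫ x, f (T x) ∂P = ∫ x, f x ∂P := by
    rw [← integral_map hT.aemeasurable (by rw [hT.map_eq]; exact hf.1), hT.map_eq]
  have htwo : (2 : ℝ) • ∫ x, f x ∂P = ∫ x, (f x + f (T x)) ∂P := by
    rw [integral_add (g := fun x => f (T x)) hf (hT.integrable_comp_of_integrable hf), hcomp,
      two_smul]
  have hbound : ‖(2 : ℝ) • ∫ x, f x ∂P‖ ≤ 2 * c := by
    rw [htwo]
    simpa using norm_integral_le_of_norm_le_const (μ := P) (.of_forall hc)
  rw [norm_smul, Real.norm_ofNat] at hbound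
  linarith

variable {E : Type*} [NormedAddCommGroup E] [NormedSpace ℝ E] [MeasurableSpace E]
  {P : Measure E} [IsProbabilityMeasure P] {m : E}

lemma integral_id_eq_of_measurePreserving_two_smul_sub [CompleteSpace E]
    (hP : MeasurePreserving (fun x => (2 : ℝ) • m - x) P P) (hint : Integrable id P) :
    ∫ x, x ∂P = m := by
  have hle : ‖∫ x, (x - m) ∂P‖ ≤ 0 :=
    norm_integral_le_of_norm_add_comp_le hP (hint.sub (integrable_const m)) fun x => by
      have hcancel : x - m + ((2 : ℝ) • m - x - m) = 0 := by module
      simp [hcancel]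
  rw [integral_sub (f := fun x => x) hint (integrable_const m), integral_const, probReal_univ,
    one_smul] at hle
  exact sub_eq_zero.1 (norm_le_zero_iff.1 hle)

lemma abs_integral_clip_comp_le [OpensMeasurableSpace E]
    (hP : MeasurePreserving (fun x => (2 : ℝ) • m - x) P P) {lam : ℝ} (hlam : 0 ≤ lam)
    (L : E →L[ℝ] ℝ) : |∫ x, clip lam (L x) ∂P| ≤ min |L m| lam := by
  refine le_min ?_ ?_
  · refine norm_integral_le_of_norm_add_comp_le hP
      (integrable_clip_comp hlam L.continuous.measurable.aemeasurable) fun x => ?_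
    simpa using norm_add_apply_two_smul_sub_le (odd_clip hlam) (lipschitzWith_clip lam) (L m) (L x)
  · simpa using norm_integral_le_of_norm_le_const (μ := P) (f := fun x => clip lam (L x))
      (.of_forall fun x => abs_clip_le hlam (L x))

end CentralSymmetry

section PowerDecay

lemma eqOn_max_rpow_Ioc (p A : ℝ) :
    Set.EqOn (fun x => max x A ^ p) (fun _ => A ^ p) (Set.Ioc 0 A) :=
  fun x hx => by simp only [max_eq_right hx.2]

lemma eqOn_max_rpow_Ioi (p A : ℝ) :
    Set.EqOn (fun x => max x A ^ p) (fun x => x ^ p) (Set.Ioi A) :=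
  fun x hx => by simp only [max_eq_left (Set.mem_Ioi.1 hx).le]

lemma integrableOn_Ioi_max_rpow_neg_s11 {a A : ℝ} (ha : 1 < a) (hA : 0 < A) :
    IntegrableOn (fun x => max x A ^ (-a)) (Set.Ioi 0) := by
  rw [← Set.Ioc_union_Ioi_eq_Ioi hA.le]
  exact ((integrableOn_const (by simp)).congr_fun (eqOn_max_rpow_Ioc _ A).symm
    measurableSet_Ioc).union ((integrableOn_Ioi_rpow_of_lt (by linarith) hA).congr_fun
      (eqOn_max_rpow_Ioi _ A).symm measurableSet_Ioi)

lemma integral_Ioi_max_rpow_neg {a A : ℝ} (ha : 1 < a) (hA : 0 < A) :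
    ∫ x in Set.Ioi 0, max x A ^ (-a) = a / (a - 1) * A ^ (1 - a) := by
  have hint := integrableOn_Ioi_max_rpow_neg_s11 ha hA
  have hhead : ∫ x in Set.Ioc 0 A, max x A ^ (-a) = A ^ (1 - a) := by
    rw [setIntegral_congr_fun measurableSet_Ioc (eqOn_max_rpow_Ioc _ A), setIntegral_const,
      Real.volume_real_Ioc_of_le hA.le, sub_zero, smul_eq_mul, sub_eq_add_neg 1 a,
      Real.rpow_add hA, Real.rpow_one]
  have htail : ∫ x in Set.Ioi A, max x A ^ (-a) = A ^ (1 - a) / (a - 1) := by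
    rw [setIntegral_congr_fun measurableSet_Ioi (eqOn_max_rpow_Ioi _ A),
      integral_Ioi_rpow_of_lt (by linarith) hA, neg_add_eq_sub, ← neg_sub a 1, neg_div_neg_eq]
  rw [← Set.Ioc_union_Ioi_eq_Ioi hA.le] at hint ⊢
  rw [setIntegral_union (Set.Ioc_disjoint_Ioi le_rfl) measurableSet_Ioi hint.left_of_union
    hint.right_of_union, hhead, htail]
  have : a - 1 ≠ 0 := by linarith
  field_simp
  ring

lemma sum_range_max_rpow_neg_le {a A : ℝ} (ha : 1 < a) (hA : 0 < A) (n : ℕ) :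
    ∑ r ∈ Finset.range n, max ((r : ℝ) + 1) A ^ (-a) ≤ a / (a - 1) * A ^ (1 - a) := by
  have hanti : Antitone fun x : ℝ => max x A ^ (-a) := fun x y hxy =>
    Real.rpow_le_rpow_of_nonpos (hA.trans_le (le_max_right _ _)) (max_le_max_right A hxy)
      (by linarith)
  calc ∑ r ∈ Finset.range n, max ((r : ℝ) + 1) A ^ (-a)
      ≤ ∫ x in (0 : ℝ)..n, max x A ^ (-a) := by
        simpa using (hanti.antitoneOn _).sum_le_integral (x₀ := 0) (a := n)
    _ = ∫ x in Set.Ioc 0 (n : ℝ), max x A ^ (-a) :=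
        intervalIntegral.integral_of_le n.cast_nonneg
    _ ≤ ∫ x in Set.Ioi 0, max x A ^ (-a) :=
        setIntegral_mono_set (integrableOn_Ioi_max_rpow_neg_s11 ha hA)
          (.of_forall fun x => by positivity) Set.Ioc_subset_Ioi_self.eventuallyLE
    _ = a / (a - 1) * A ^ (1 - a) := integral_Ioi_max_rpow_neg ha hA

lemma sum_range_min_mul_rpow_neg_le {a B D : ℝ} (ha : 1 < a) (hB : 0 < B) (hD : 0 < D) (n : ℕ) :
    ∑ r ∈ Finset.range n, min B (D * ((r : ℝ) + 1) ^ (-a)) ≤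
      a / (a - 1) * (B ^ (1 - 1 / a) * D ^ (1 / a)) := by
  have ha0 : 0 < a := by linarith
  -- the crossover point, at which `D * x ^ (-a) = B`
  set A := (D / B) ^ (1 / a) with hA
  have hA0 : 0 < A := by positivity
  have hcross : D * A ^ (-a) = B := by
    rw [hA, ← Real.rpow_mul (by positivity), mul_neg, one_div_mul_cancel ha0.ne',
      Real.rpow_neg_one]
    field_simp
  have hscale : D * A ^ (1 - a) = B ^ (1 - 1 / a) * D ^ (1 / a) := by
    rw [sub_eq_neg_add, Real.rpow_add hA0, ← mul_assoc, hcross, Real.rpow_one, hA,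
      Real.div_rpow hD.le hB.le, Real.rpow_sub hB, Real.rpow_one]
    ring
  have hterm (r : ℕ) : min B (D * ((r : ℝ) + 1) ^ (-a)) ≤ D * max ((r : ℝ) + 1) A ^ (-a) := by
    rcases max_choice ((r : ℝ) + 1) A with h | h <;> rw [h]
    · exact min_le_right _ _
    · exact hcross ▸ min_le_left _ _
  calc ∑ r ∈ Finset.range n, min B (D * ((r : ℝ) + 1) ^ (-a))
      ≤ D * ∑ r ∈ Finset.range n, max ((r : ℝ) + 1) A ^ (-a) := by
        rw [Finset.mul_sum]
        exact Finset.sum_le_sum fun r _ => hterm r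
    _ ≤ D * (a / (a - 1) * A ^ (1 - a)) :=
        mul_le_mul_of_nonneg_left (sum_range_max_rpow_neg_le ha hA0 n) hD.le
    _ = a / (a - 1) * (B ^ (1 - 1 / a) * D ^ (1 / a)) := by rw [← hscale]; ring

/-- The upper half of the decay condition: some enumeration of the entries of `z` satisfies
`|z_r| ≤ C (r + 1) ^ (-s)`, with ranks counted from `0`. The enumeration need not be sorted: such a
bound is inherited by the decreasing rearrangement. -/
def HasPowerDecay {ι : Type*} (s C : ℝ) (z : ι → ℝ) : Prop :=
  ∃ (n : ℕ) (e : Fin n ≃ ι), ∀ r, |z (e r)| ≤ C * ((r : ℝ) + 1) ^ (-s)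

lemma sortedDecay.hasPowerDecay {s c₁ c₂ : ℝ} {d : ℕ} {z : Fin d → ℝ}
    (hz : sortedDecay s c₁ c₂ z) : HasPowerDecay s c₂ z :=
  let ⟨e, _, he⟩ := hz
  ⟨d, e, fun r => (he r).2⟩

lemma HasPowerDecay.sum_min_sq_le {ι : Type*} [Fintype ι] {s C lam : ℝ} {z : ι → ℝ}
    (hz : HasPowerDecay s C z) (hs : 1 / 2 < s) (hC : 0 < C) (hlam : 0 < lam) :
    ∑ i, min |z i| lam ^ 2 ≤ 2 * s / (2 * s - 1) * (C ^ (1 / s) * lam ^ (2 - 1 / s)) := by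
  obtain ⟨n, e, he⟩ := hz
  have : 0 < s := by linarith
  have hterm (r : Fin n) :
      min |z (e r)| lam ^ 2 ≤ min (lam ^ 2) (C ^ 2 * ((r : ℝ) + 1) ^ (-(2 * s))) := by
    have hpow : C ^ 2 * ((r : ℝ) + 1) ^ (-(2 * s)) = (C * ((r : ℝ) + 1) ^ (-s)) ^ 2 := by
      rw [mul_pow, ← Real.rpow_mul_natCast (by positivity)]
      norm_num [mul_comm]
    have hmin : 0 ≤ min |z (e r)| lam := le_min (abs_nonneg _) hlam.le
    rw [hpow]
    exact le_min (pow_le_pow_left₀ hmin (min_le_right _ _) 2)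
      (pow_le_pow_left₀ hmin ((min_le_left _ _).trans (he r)) 2)
  have hpow_lam : (lam ^ 2) ^ (1 - 1 / (2 * s)) = lam ^ (2 - 1 / s) := by
    rw [← Real.rpow_natCast_mul hlam.le]
    congr 1
    field_simp
    norm_num
  have hpow_C : (C ^ 2) ^ (1 / (2 * s)) = C ^ (1 / s) := by
    rw [← Real.rpow_natCast_mul hC.le]
    congr 1
    field_simp
    norm_num
  calc ∑ i, min |z i| lam ^ 2 = ∑ r, min |z (e r)| lam ^ 2 := (e.sum_comp _).symm
    _ ≤ ∑ r : Fin n, min (lam ^ 2) (C ^ 2 * ((r : ℝ) + 1) ^ (-(2 * s))) :=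
        Finset.sum_le_sum fun r _ => hterm r
    _ = ∑ r ∈ Finset.range n, min (lam ^ 2) (C ^ 2 * ((r : ℝ) + 1) ^ (-(2 * s))) :=
        (Finset.sum_range fun r : ℕ => min (lam ^ 2) (C ^ 2 * ((r : ℝ) + 1) ^ (-(2 * s)))).symm
    _ ≤ 2 * s / (2 * s - 1) * ((lam ^ 2) ^ (1 - 1 / (2 * s)) * (C ^ 2) ^ (1 / (2 * s))) :=
        sum_range_min_mul_rpow_neg_le (by linarith) (by positivity) (by positivity) n
    _ = 2 * s / (2 * s - 1) * (C ^ (1 / s) * lam ^ (2 - 1 / s)) := by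
        rw [hpow_lam, hpow_C, mul_comm (C ^ _)]

end PowerDecay

section ParsevalFrame

variable {ι κ : Type*} [Fintype ι] [Fintype κ] {F : Matrix κ ι ℝ} {lam : ℝ}
  {P : Measure (ι → ℝ)}

/-- Soft-thresholding in the frame whose analysis matrix is `F`: `Φ(x) = Fᵀ ρ_t(F x)`. -/
noncomputable def frameThresh (F : Matrix κ ι ℝ) (lam : ℝ) (x : ι → ℝ) : ι → ℝ :=
  Fᵀ *ᵥ fun j => softThresh lam ((F *ᵥ x) j)

lemma integrable_clip_mulVec [IsFiniteMeasure P] (F : Matrix κ ι ℝ) (hlam : 0 ≤ lam) :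
    Integrable (fun x j => clip lam ((F *ᵥ x) j)) P :=
  .of_eval fun _ => integrable_clip_comp hlam (by fun_prop)

variable [DecidableEq ι]

-- Expand `0 ≤ ‖v - F Fᵀ v‖²`, using that `F` is an isometry.
lemma sum_sq_transpose_mulVec_le (hF : Fᵀ * F = 1) (v : κ → ℝ) :
    ∑ i, (Fᵀ *ᵥ v) i ^ 2 ≤ ∑ j, v j ^ 2 := by
  set u := Fᵀ *ᵥ v
  have hcross : v ⬝ᵥ F *ᵥ u = u ⬝ᵥ u := by
    rw [dotProduct_mulVec, ← mulVec_transpose]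
  have hiso : F *ᵥ u ⬝ᵥ F *ᵥ u = u ⬝ᵥ u := by
    rw [dotProduct_mulVec, ← mulVec_transpose, mulVec_mulVec, hF, one_mulVec]
  have hnonneg : 0 ≤ (v - F *ᵥ u) ⬝ᵥ (v - F *ᵥ u) :=
    Finset.sum_nonneg fun j _ => mul_self_nonneg _
  rw [sub_dotProduct, dotProduct_sub, dotProduct_sub, dotProduct_comm (F *ᵥ u) v, hcross,
    hiso] at hnonneg
  have hle : u ⬝ᵥ u ≤ v ⬝ᵥ v := by linarith
  simpa only [dotProduct, ← sq] using hle

lemma frameThresh_eq_sub_transpose_mulVec_clip (hF : Fᵀ * F = 1) (hlam : 0 ≤ lam)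
    (x : ι → ℝ) : frameThresh F lam x = x - Fᵀ *ᵥ fun j => clip lam ((F *ᵥ x) j) := by
  simp only [frameThresh, softThresh_eq_sub_clip hlam]
  change Fᵀ *ᵥ (F *ᵥ x - fun j => clip lam ((F *ᵥ x) j)) = _
  rw [mulVec_sub, mulVec_mulVec, hF, one_mulVec]

lemma integrable_frameThresh [IsFiniteMeasure P] (hF : Fᵀ * F = 1) (hlam : 0 ≤ lam)
    (hint : Integrable id P) : Integrable (frameThresh F lam) P := by
  rw [funext (frameThresh_eq_sub_transpose_mulVec_clip hF hlam)]
  exact hint.sub (Fᵀ.mulVecLin.toContinuousLinearMap.integrable_comp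
    (integrable_clip_mulVec F hlam))

variable [IsProbabilityMeasure P]

lemma center_sub_integral_frameThresh (hF : Fᵀ * F = 1) (hlam : 0 ≤ lam) {m : ι → ℝ}
    (hP : MeasurePreserving (fun x => (2 : ℝ) • m - x) P P) (hint : Integrable id P) :
    m - ∫ x, frameThresh F lam x ∂P = Fᵀ *ᵥ fun j => ∫ x, clip lam ((F *ᵥ x) j) ∂P := by
  have hclip := integrable_clip_mulVec (P := P) F hlam
  have hcomm : ∫ x, Fᵀ *ᵥ (fun j => clip lam ((F *ᵥ x) j)) ∂P =
      Fᵀ *ᵥ ∫ x, (fun j => clip lam ((F *ᵥ x) j)) ∂P :=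
    Fᵀ.mulVecLin.toContinuousLinearMap.integral_comp_comm hclip
  simp_rw [frameThresh_eq_sub_transpose_mulVec_clip hF hlam]
  rw [integral_sub (f := fun x => x) (g := fun x => Fᵀ *ᵥ fun j => clip lam ((F *ᵥ x) j)) hint
      (Fᵀ.mulVecLin.toContinuousLinearMap.integrable_comp hclip),
    integral_id_eq_of_measurePreserving_two_smul_sub hP hint, sub_sub_cancel, hcomm]
  congr 1
  ext j
  exact eval_integral hclip.eval j

lemma sum_sq_center_sub_integral_frameThresh_le {s C : ℝ} (hs : 1 / 2 < s) (hC : 0 < C)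
    (hF : Fᵀ * F = 1) (hlam : 0 < lam) {m : ι → ℝ}
    (hP : MeasurePreserving (fun x => (2 : ℝ) • m - x) P P) (hint : Integrable id P)
    (hm : HasPowerDecay s C (F *ᵥ m)) :
    ∑ i, (m i - (∫ x, frameThresh F lam x ∂P) i) ^ 2 ≤
      2 * s / (2 * s - 1) * (C ^ (1 / s) * lam ^ (2 - 1 / s)) := by
  have hbias (j : κ) : |∫ x, clip lam ((F *ᵥ x) j) ∂P| ≤ min |(F *ᵥ m) j| lam :=
    abs_integral_clip_comp_le hP hlam.le
      (ContinuousLinearMap.proj (R := ℝ) (φ := fun _ => ℝ) j ∘L F.mulVecLin.toContinuousLinearMap)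
  calc ∑ i, (m i - (∫ x, frameThresh F lam x ∂P) i) ^ 2
      = ∑ i, (Fᵀ *ᵥ fun j => ∫ x, clip lam ((F *ᵥ x) j) ∂P) i ^ 2 := by
        simp only [← center_sub_integral_frameThresh hF hlam.le hP hint, Pi.sub_apply]
    _ ≤ ∑ j, (∫ x, clip lam ((F *ᵥ x) j) ∂P) ^ 2 := sum_sq_transpose_mulVec_le hF _
    _ ≤ ∑ j, min |(F *ᵥ m) j| lam ^ 2 := Finset.sum_le_sum fun j _ =>
        sq_le_sq' (abs_le.1 (hbias j)).1 (abs_le.1 (hbias j)).2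
    _ ≤ _ := hm.sum_min_sq_le hs hC hlam

end ParsevalFrame

section Mixture

variable {κ : Type*} [Fintype κ] {w : κ → ℝ}

lemma integral_sum_ofReal_smul_measure {α E : Type*} [MeasurableSpace α] [NormedAddCommGroup E]
    [NormedSpace ℝ E] (hw : ∀ k, 0 ≤ w k) {P : κ → Measure α} {f : α → E}
    (hf : ∀ k, Integrable f (P k)) :
    ∫ x, f x ∂(∑ k, ENNReal.ofReal (w k) • P k) = ∑ k, w k • ∫ x, f x ∂(P k) := by
  rw [integral_finsetSum_measure fun k _ => (hf k).smul_measure ENNReal.ofReal_ne_top]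
  simp only [integral_smul_measure, ENNReal.toReal_ofReal (hw _)]

lemma sum_sq_sum_smul_sub_le {ι : Type*} [Fintype ι] (hw : ∀ k, 0 ≤ w k) (hw1 : ∑ k, w k = 1)
    {u v : κ → ι → ℝ} {R : ℝ} (hR : ∀ k, ∑ i, (u k i - v k i) ^ 2 ≤ R) :
    ∑ i, ((∑ k, w k • u k) i - (∑ k, w k • v k) i) ^ 2 ≤ R :=
  calc ∑ i, ((∑ k, w k • u k) i - (∑ k, w k • v k) i) ^ 2
      = ∑ i, (∑ k, w k * (u k i - v k i)) ^ 2 := by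
        simp only [Finset.sum_apply, Pi.smul_apply, smul_eq_mul, mul_sub, Finset.sum_sub_distrib]
    _ ≤ ∑ i, ∑ k, w k * (u k i - v k i) ^ 2 := Finset.sum_le_sum fun i _ =>
        Real.pow_arith_mean_le_arith_mean_pow_of_even _ _ _ (fun k _ => hw k) hw1 even_two
    _ = ∑ k, w k * ∑ i, (u k i - v k i) ^ 2 := by
        rw [Finset.sum_comm]
        simp only [Finset.mul_sum]
    _ ≤ ∑ k, w k * R := Finset.sum_le_sum fun k _ => mul_le_mul_of_nonneg_left (hR k) (hw k)
    _ = R := by rw [← Finset.sum_mul, hw1, one_mul]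

end Mixture

section Gaussian

variable {d : ℕ} (m : Fin d → ℝ) (σ : ℝ)

instance isProbabilityMeasure_gaussPi : IsProbabilityMeasure (gaussPi d m σ) := by
  unfold gaussPi
  infer_instance

lemma measurePreserving_two_smul_sub_gaussPi :
    MeasurePreserving (fun x => (2 : ℝ) • m - x) (gaussPi d m σ) (gaussPi d m σ) := by
  refine measurePreserving_pi (f := fun i t => 2 * m i - t) _ _ fun i => ⟨by fun_prop, ?_⟩
  rw [gaussianReal_map_const_sub, two_mul, add_sub_cancel_right]

lemma integrable_id_gaussPi : Integrable id (gaussPi d m σ) :=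
  .of_eval fun _ => integrable_eval IsGaussian.integrable_id

end Gaussian

lemma one_le_two_mul_log {x : ℝ} (hx : 2 ≤ x) : 1 ≤ 2 * Real.log x := by
  linarith [Real.log_two_gt_d9, Real.log_le_log two_pos hx]

lemma mul_sqrt_rpow_le {σ L p : ℝ} (hσ : 0 ≤ σ) (hL : 1 ≤ L) (hp : p ≤ 2) :
    (σ * √L) ^ p ≤ σ ^ p * L := by
  rw [Real.mul_rpow hσ (Real.sqrt_nonneg L)]
  gcongr
  calc √L ^ p ≤ √L ^ (2 : ℝ) := Real.rpow_le_rpow_of_exponent_le (Real.one_le_sqrt.2 hL) hp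
    _ = L := by rw [Real.rpow_two, Real.sq_sqrt (by linarith)]

theorem class_mean_displacement_bound_general {ι κ η : Type*} [Fintype ι] [Fintype κ] [Fintype η]
    [DecidableEq ι] {s C lam : ℝ} (hs : 1 / 2 < s) (hC : 0 < C) (hlam : 0 < lam)
    {F : Matrix κ ι ℝ} (hF : Fᵀ * F = 1) {w : η → ℝ} (hw : ∀ k, 0 ≤ w k) (hw1 : ∑ k, w k = 1)
    {m : η → ι → ℝ} (hm : ∀ k, HasPowerDecay s C (F *ᵥ m k)) {P : η → Measure (ι → ℝ)}
    [∀ k, IsProbabilityMeasure (P k)] (hint : ∀ k, Integrable id (P k))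
    (hP : ∀ k, MeasurePreserving (fun x => (2 : ℝ) • m k - x) (P k) (P k)) :
    ∑ i, ((∑ k, w k • m k) i -
        (∫ x, frameThresh F lam x ∂(∑ k, ENNReal.ofReal (w k) • P k)) i) ^ 2 ≤
      2 * s / (2 * s - 1) * (C ^ (1 / s) * lam ^ (2 - 1 / s)) := by
  rw [integral_sum_ofReal_smul_measure hw fun k => integrable_frameThresh hF hlam.le (hint k)]
  exact sum_sq_sum_smul_sub_le hw hw1 fun k =>
    sum_sq_center_sub_integral_frameThresh_le hs hC hF hlam (hP k) (hint k) (hm k)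

/-- Class-mean displacement bound.  For Gaussian mixture classes
`ν_c = ∑_k π_{c,k} N(μ_{c,k}, σ² I_d)` whose centers all satisfy the decay condition in
the orthogonal basis `F`, the tight frame soft-thresholding `Φ(x) = Fᵀ ρ_t(F x)` with
`λ = σ √(2 log d)` moves each class mean by at most `K σ^{2−1/s} log d` (squared norm). -/
theorem class_mean_displacement_bound
    (s c₁ c₂ : ℝ) (hs : 1 / 2 < s) (hc₁ : 0 < c₁) (hc₂ : 0 < c₂) :
    ∃ K > 0, ∀ d : ℕ, 4 ≤ d → ∀ σ : ℝ, 0 < σ → σ ≤ c₁ →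
      ∀ F : Matrix (Fin d) (Fin d) ℝ, Fᵀ * F = 1 →
      ∀ C : ℕ, 0 < C →
      ∀ (Kc : Fin C → ℕ) (w : (c : Fin C) → Fin (Kc c) → ℝ)
        (μmix : (c : Fin C) → Fin (Kc c) → Fin d → ℝ),
        (∀ c k, 0 ≤ w c k) → (∀ c, ∑ k, w c k = 1) →
        (∀ c k, sortedDecay s c₁ c₂ (F.mulVec (μmix c k))) →
      ∀ ν : Fin C → Measure (Fin d → ℝ),
        (∀ c, ν c = ∑ k, ENNReal.ofReal (w c k) • gaussPi d (μmix c k) σ) →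
      ∀ Φ : (Fin d → ℝ) → (Fin d → ℝ),
        Φ = (fun x => Fᵀ.mulVec fun i =>
          softThresh (σ * Real.sqrt (2 * Real.log d)) (F.mulVec x i)) →
      ∀ (μcl : Fin C → Fin d → ℝ), (∀ c, μcl c = ∑ k, w c k • μmix c k) →
      ∀ (μb : Fin C → Fin d → ℝ), (∀ c, μb c = ∫ x, Φ x ∂ν c) →
      ∀ c : Fin C,
        ∑ i, (μcl c i - μb c i) ^ 2 ≤ K * σ ^ (2 - 1 / s) * Real.log d := by
  have hs1 : 0 < 2 * s - 1 := by linarith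
  have hs0 : 0 < s := by linarith
  refine ⟨2 * s / (2 * s - 1) * c₂ ^ (1 / s) * 2, by positivity, ?_⟩
  rintro d hd σ hσ - F hF C - Kc w μmix hw hw1 hdec ν hν _ rfl μcl hμcl μb hμb c
  have hL : 1 ≤ 2 * Real.log d := one_le_two_mul_log (by exact_mod_cast (by omega : 2 ≤ d))
  have hlam : 0 < σ * √(2 * Real.log d) := by positivity
  rw [hμcl, hμb, hν]
  calc _ ≤ 2 * s / (2 * s - 1) * (c₂ ^ (1 / s) * (σ * √(2 * Real.log d)) ^ (2 - 1 / s)) :=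
        class_mean_displacement_bound_general hs hc₂ hlam hF (hw c) (hw1 c)
          (fun k => (hdec c k).hasPowerDecay) (fun k => integrable_id_gaussPi _ σ)
          fun k => measurePreserving_two_smul_sub_gaussPi _ σ
    _ ≤ 2 * s / (2 * s - 1) * (c₂ ^ (1 / s) * (σ ^ (2 - 1 / s) * (2 * Real.log d))) := by
        gcongr
        exact mul_sqrt_rpow_le hσ.le hL (by simp [hs0.le])
    _ = _ := by ring
end
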